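/- Let k and i be integers with 1 < i < k. The number of permutations σ of {1,…,k} such that σ(i) = i and σ fixes no prefix of size j for any 1 ≤ j ≤ k−1 equals c_{k−1}, the number of connected permutations of size k−1. -/

import Mathlib

open Nat Finset

/-- The prefix `{1, …, j}` of `{1, …, n}`. We represent `{1, …, n}` by `Fin n`,
an element `x : Fin n` having label `x.val + 1`; so the prefix of size `j` is the
set of elements with label at most `j`. -/
def pref (n j : ℕ) : Finset (Fin n) :=
  Finset.univ.filter (fun x => x.val + 1 ≤ j)

/-- The segment `{u, …, v}` inside `{1, …, n}` (labels as above). -/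
def seg (n u v : ℕ) : Finset (Fin n) :=
  Finset.univ.filter (fun x => u ≤ x.val + 1 ∧ x.val + 1 ≤ v)

/-- A permutation `σ` of `{1, …, n}` fixes a prefix of size `j` if
`σ({1, …, j}) = {1, …, j}`. -/
def FixesPrefix {n : ℕ} (σ : Equiv.Perm (Fin n)) (j : ℕ) : Prop :=
  (pref n j).image σ = pref n j

/-- `c n`: the number of connected permutations of size `n`, i.e. permutations of
`{1, …, n}` fixing no prefix of size `j` for any `1 ≤ j ≤ n - 1`. -/
noncomputable def c (n : ℕ) : ℕ :=
  Nat.card {σ : Equiv.Perm (Fin n) // ∀ j, 1 ≤ j → j ≤ n - 1 → ¬ FixesPrefix σ j}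

/-- `cS n S`: the number of `S`-connected permutations of size `n`, i.e. permutations of
`{1, …, n}` fixing no prefix of size `j` for any `j ∈ S`. -/
noncomputable def cS (n : ℕ) (S : Finset ℕ) : ℕ :=
  Nat.card {σ : Equiv.Perm (Fin n) // ∀ j ∈ S, ¬ FixesPrefix σ j}

lemma fixesPrefix_iff {n : ℕ} (σ : Equiv.Perm (Fin n)) (j : ℕ) :
    FixesPrefix σ j ↔ ∀ x : Fin n, x.val < j → (σ x).val < j := by
  unfold FixesPrefix
  constructor
  · intro h x hx
    have : σ x ∈ (pref n j).image σ :=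
      Finset.mem_image_of_mem _ (by simp [pref]; omega)
    rw [h] at this
    simp [pref] at this
    omega
  · intro h
    apply Finset.eq_of_subset_of_card_le
    · intro y hy
      simp only [pref, Finset.mem_image, Finset.mem_filter, Finset.mem_univ, true_and] at hy ⊢
      obtain ⟨x, hx, rfl⟩ := hy
      exact h x hx
    · rw [Finset.card_image_of_injective _ σ.injective]

lemma succAbove_val {n : ℕ} (p : Fin (n+1)) (x : Fin n) :
    (p.succAbove x).val = if x.val < p.val then x.val else x.val + 1 := by
  rw [Fin.succAbove]
  simp only [Fin.lt_def, Fin.val_castSucc]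
  split_ifs <;> simp

lemma fixesPrefix_lift {n : ℕ} (p : Fin (n+1)) (σ : Equiv.Perm (Fin (n+1)))
    (τ : Equiv.Perm (Fin n)) (hp : σ p = p)
    (h : ∀ x, σ (p.succAbove x) = p.succAbove (τ x)) (j : ℕ) :
    FixesPrefix σ j ↔ FixesPrefix τ (if j ≤ p.val then j else j - 1) := by
  have key : ∀ x : Fin n, (p.succAbove x).val < j ↔ x.val < (if j ≤ p.val then j else j - 1) := by
    intro x
    rw [succAbove_val]
    split_ifs <;> omega
  rw [fixesPrefix_iff, fixesPrefix_iff, Fin.forall_iff_succAbove p, hp]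
  simp only [h, key]
  tauto

lemma connected_lift {n : ℕ} (p : Fin (n+1)) (σ : Equiv.Perm (Fin (n+1)))
    (τ : Equiv.Perm (Fin n)) (h0 : 0 < p.val) (hn : p.val < n) (hp : σ p = p)
    (h : ∀ x, σ (p.succAbove x) = p.succAbove (τ x)) :
    (∀ j, 1 ≤ j → j ≤ n → ¬ FixesPrefix σ j) ↔
      ∀ j, 1 ≤ j → j ≤ n - 1 → ¬ FixesPrefix τ j := by
  simp only [fixesPrefix_lift p σ τ hp h]
  constructor
  · intro H j hj1 hj2
    by_cases hj : j ≤ p.val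
    · have := H j hj1 (by omega)
      rwa [if_pos hj] at this
    · have := H (j+1) (by omega) (by omega)
      rwa [if_neg (by omega)] at this
  · intro H j hj1 hj2
    split_ifs <;> exact H _ (by omega) (by omega)

lemma count_aux {n : ℕ} (p : Fin (n+1)) (h0 : 0 < p.val) (hn : p.val < n) :
    Nat.card {σ : Equiv.Perm (Fin (n+1)) //
      σ p = p ∧ ∀ j, 1 ≤ j → j ≤ n → ¬ FixesPrefix σ j} = c n := by
  unfold c
  symm
  have e1 : ∀ τ : Equiv.Perm (Fin n), (τ.extendDomain (finSuccAboveEquiv p)) p = p := by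
    intro τ
    exact Equiv.Perm.extendDomain_apply_not_subtype _ _ (by simp)
  have e2 : ∀ (τ : Equiv.Perm (Fin n)) x,
      (τ.extendDomain (finSuccAboveEquiv p)) (p.succAbove x) = p.succAbove (τ x) := by
    intro τ x
    exact Equiv.Perm.extendDomain_apply_image τ (finSuccAboveEquiv p) x
  refine Nat.card_eq_of_bijective
    (fun τ => ⟨τ.1.extendDomain (finSuccAboveEquiv p), e1 _,
      (connected_lift p _ τ.1 h0 hn (e1 _) (e2 _)).2 τ.2⟩) ⟨?_, ?_⟩
  · rintro ⟨a, ha⟩ ⟨b, hb⟩ hab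
    have hab' := congrArg Subtype.val hab
    simp only at hab'
    apply Subtype.ext
    ext x
    have := e2 a x
    rw [hab', e2 b x] at this
    rw [Fin.succAbove_right_injective this]
  · rintro ⟨σ, hp, hσ⟩
    have hs : ∀ x, σ x ≠ p ↔ x ≠ p := by
      intro x
      rw [not_iff_not]
      exact ⟨fun hx => σ.injective (hx.trans hp.symm), fun hx => hx ▸ hp⟩
    let τ : Equiv.Perm (Fin n) :=
      ((finSuccAboveEquiv p).trans (σ.subtypePerm hs)).trans (finSuccAboveEquiv p).symm
    have hτ : ∀ x, σ (p.succAbove x) = p.succAbove (τ x) := by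
      intro x
      have : finSuccAboveEquiv p (τ x) = σ.subtypePerm hs (finSuccAboveEquiv p x) := by
        simp [τ]
      exact (congrArg Subtype.val this).symm
    refine ⟨⟨τ, (connected_lift p σ τ h0 hn hp hτ).1 hσ⟩, ?_⟩
    apply Subtype.ext
    apply Equiv.ext
    rw [Fin.forall_iff_succAbove p]
    exact ⟨(e1 τ).trans hp.symm, fun x => (e2 τ x).trans (hτ x).symm⟩


/-- For `1 < i < k`, the number of permutations `σ` of `{1,…,k}` such that `σ(i) = i` and
`σ` fixes no prefix of size `j` for any `1 ≤ j ≤ k−1` equals `c_{k−1}`.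
(Labels: the element of `Fin k` with value `v` has label `v + 1`.) -/
theorem count_i_fixed (k i : ℕ) (h1 : 1 < i) (h2 : i < k) :
    Nat.card {σ : Equiv.Perm (Fin k) //
      σ ⟨i - 1, by omega⟩ = ⟨i - 1, by omega⟩ ∧
      ∀ j, 1 ≤ j → j ≤ k - 1 → ¬ FixesPrefix σ j}
    = c (k - 1) := by
  obtain ⟨n, rfl⟩ : ∃ n, k = n + 1 := ⟨k - 1, by omega⟩
  have ha : 0 < i - 1 := by omega
  have hb : i - 1 < n := by omega
  exact count_aux (n := n) ⟨i - 1, by omega⟩ ha hb
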